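/- Two minimal representations are semantically equal if and only if they are equal as sets: for minimal representations U and V, max{⟦u⟧σ : u ∈ U} = max{⟦v⟧σ : v ∈ V} for every valuation σ if and only if U = V. -/

import Mathlib

/-- The impredicative maximum on natural numbers. -/
def imaxN : ℕ → ℕ → ℕ
  | _, 0 => 0
  | i, (j+1) => max i (j+1)

/-- Sublevels A(E,x,S) and B(E,S). -/
inductive SubLvl where
  | A : Finset ℕ → ℕ → ℕ → SubLvl
  | B : Finset ℕ → ℕ → SubLvl
deriving DecidableEq

/-- Value of a sublevel under a valuation. -/
def evalS (σ : ℕ → ℕ) : SubLvl → ℕ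
  | .A E x S => if ∃ y ∈ E, σ y = 0 then 0 else σ x + S
  | .B E S => if ∃ y ∈ E, σ y = 0 then 0 else S

/-- Wellformed sublevels. -/
def Wf : SubLvl → Prop
  | .A E x _ => x ∈ E
  | .B _ S => 0 < S

/-- Semantic comparison of sublevels. -/
def leT (u v : SubLvl) : Prop := ∀ σ : ℕ → ℕ, evalS σ u ≤ evalS σ v

/-- A minimal representation: a finite set of wellformed, pairwise
incomparable sublevels. -/
def MinRep (U : Finset SubLvl) : Prop :=
  (∀ u ∈ U, Wf u) ∧ ∀ u ∈ U, ∀ v ∈ U, u ≠ v → ¬ leT u v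

/-!
Wellformed sublevels are join-prime: if `u` is bounded by a finite maximum of sublevels, it is
bounded by one of them. For `u = B(E,S)` this is read off at the indicator of `E`. For
`u = A(E,x,S)` the value at `x` is raised beyond all constants in the maximum, so that only a
sublevel `A(F,x,T)` with `F ⊆ E` and `S ≤ T` can keep up with `u`. Since `≤_T` is antisymmetric on
wellformed sublevels, two antichains with the same maximum dominate each other and hence coincide.
-/

theorem subset_of_isAntichain_of_dominated {α : Type*} {r : α → α → Prop} [IsTrans α r]
    {s t : Set α} (hs : IsAntichain r s)
    (antisymm : ∀ a ∈ s, ∀ b ∈ t, r a b → r b a → a = b)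
    (hst : ∀ a ∈ s, ∃ b ∈ t, r a b) (hts : ∀ b ∈ t, ∃ a ∈ s, r b a) : s ⊆ t := by
  intro a ha
  obtain ⟨b, hb, hab⟩ := hst a ha
  obtain ⟨a', ha', hba'⟩ := hts b hb
  obtain rfl : a = a' := hs.eq ha ha' (_root_.trans hab hba')
  exact antisymm a ha b hb hab hba' ▸ hb

/-- The guard `E` of `A(E,x,S)` and `B(E,S)`: the value is cut off to `0` as soon as one of these
variables vanishes. -/
def SubLvl.guard : SubLvl → Finset ℕ
  | .A E _ _ => E
  | .B E _ => E

/-- The additive constant `S` of `A(E,x,S)` and `B(E,S)`, used to choose valuations that outgrow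
given sublevels. -/
def SubLvl.const : SubLvl → ℕ
  | .A _ _ S => S
  | .B _ S => S

section Evaluation

variable {σ : ℕ → ℕ} {E : Finset ℕ} {x S : ℕ} {u : SubLvl}

theorem evalS_A_of_forall_ne_zero (h : ∀ y ∈ E, σ y ≠ 0) : evalS σ (.A E x S) = σ x + S :=
  if_neg (by simpa using h)

theorem evalS_B_of_forall_ne_zero (h : ∀ y ∈ E, σ y ≠ 0) : evalS σ (.B E S) = S :=
  if_neg (by simpa using h)

theorem ne_zero_of_mem_guard_of_evalS_ne_zero (h : evalS σ u ≠ 0) {y : ℕ} (hy : y ∈ u.guard) :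
    σ y ≠ 0 := by
  intro hσy
  cases u <;> exact h (if_pos ⟨y, hy, hσy⟩)

theorem evalS_mono (u : SubLvl) : Monotone fun σ ↦ evalS σ u := by
  intro σ τ hστ
  by_cases hσ : evalS σ u = 0
  · simp only [hσ, zero_le]
  have hσ_guard : ∀ y ∈ u.guard, σ y ≠ 0 := fun _ ↦ ne_zero_of_mem_guard_of_evalS_ne_zero hσ
  have hτ_guard : ∀ y ∈ u.guard, τ y ≠ 0 := fun y hy hτy ↦
    hσ_guard y hy (Nat.le_zero.mp (hτy ▸ hστ y))
  cases u with
  | A E x S =>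
    simpa only [evalS_A_of_forall_ne_zero (E := E) hσ_guard,
      evalS_A_of_forall_ne_zero (E := E) hτ_guard] using Nat.add_le_add_right (hστ x) S
  | B E S =>
    simp only [evalS_B_of_forall_ne_zero (E := E) hσ_guard,
      evalS_B_of_forall_ne_zero (E := E) hτ_guard, le_refl]

theorem Wf.evalS_ne_zero (hu : Wf u) (h : ∀ y ∈ u.guard, σ y ≠ 0) : evalS σ u ≠ 0 := by
  cases u with
  | A E x S =>
    rw [evalS_A_of_forall_ne_zero (E := E) h]
    exact (Nat.add_pos_left (Nat.pos_of_ne_zero (h x hu)) S).ne'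
  | B E S =>
    rw [evalS_B_of_forall_ne_zero (E := E) h]
    exact Nat.ne_of_gt hu

end Evaluation

section Comparison

variable {E F : Finset ℕ} {x S T : ℕ} {u v : SubLvl}

instance : IsTrans SubLvl leT where
  trans _ _ _ huv hvw σ := (huv σ).trans (hvw σ)

theorem guard_subset_of_leT (hu : Wf u) (h : leT u v) : v.guard ⊆ u.guard := by
  intro y hy
  let σ : ℕ → ℕ := (u.guard : Set ℕ).indicator 1
  have hu_ne : evalS σ u ≠ 0 := hu.evalS_ne_zero fun z hz ↦ by simp [σ, hz]
  have hv_ne : evalS σ v ≠ 0 := fun hv ↦ hu_ne (Nat.le_zero.mp (hv ▸ h σ))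
  exact Set.mem_of_indicator_ne_zero (ne_zero_of_mem_guard_of_evalS_ne_zero hv_ne hy)

theorem not_forall_evalS_A_eq_evalS_B : ¬ ∀ σ, evalS σ (.A E x S) = evalS σ (.B F T) := by
  intro h
  have hone : 1 + S = T := by simpa [evalS] using h 1
  have htwo : 2 + S = T := by simpa [evalS] using h 2
  omega

theorem leT_antisymm (hu : Wf u) (hv : Wf v) (huv : leT u v) (hvu : leT v u) : u = v := by
  have hguard : u.guard = v.guard :=
    (guard_subset_of_leT hv hvu).antisymm (guard_subset_of_leT hu huv)
  have heval (σ : ℕ → ℕ) : evalS σ u = evalS σ v := (huv σ).antisymm (hvu σ)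
  cases u with
  | A E x S =>
    cases v with
    | A F y T =>
      have hST : S = T := by simpa [evalS] using heval 1
      have hyx : y = x := by
        by_contra hne
        have hpos (z : ℕ) : Function.update (1 : ℕ → ℕ) x 2 z ≠ 0 := by
          by_cases hzx : z = x <;> simp [hzx]
        have hx : 2 + S = 1 + T := by simpa [evalS, hne, hpos] using heval (Function.update 1 x 2)
        omega
      obtain rfl : E = F := hguard
      rw [hST, hyx]
    | B F T => exact absurd heval not_forall_evalS_A_eq_evalS_B
  | B E S =>
    cases v with
    | A F y T => exact absurd (fun σ ↦ (heval σ).symm) not_forall_evalS_A_eq_evalS_B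
    | B F T =>
      have hST : S = T := by simpa [evalS] using heval 1
      obtain rfl : E = F := hguard
      rw [hST]

theorem leT_A_A_of_subset_of_le (hFE : F ⊆ E) (hST : S ≤ T) : leT (.A E x S) (.A F x T) := by
  intro σ
  by_cases hσ : evalS σ (.A E x S) = 0
  · simp only [hσ, zero_le]
  have hE : ∀ y ∈ E, σ y ≠ 0 := fun _ ↦ ne_zero_of_mem_guard_of_evalS_ne_zero hσ
  rw [evalS_A_of_forall_ne_zero hE, evalS_A_of_forall_ne_zero fun y hy ↦ hE y (hFE hy)]
  exact Nat.add_le_add_left hST _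

-- The indicator of `E` is the least valuation at which `B(E,S)` is not cut off to `0`.
theorem leT_B_iff : leT (.B E S) v ↔ S ≤ evalS ((E : Set ℕ).indicator 1) v := by
  constructor
  · intro h
    have hB := h ((E : Set ℕ).indicator 1)
    rwa [evalS_B_of_forall_ne_zero fun y hy ↦ by simp [hy]] at hB
  · intro h σ
    by_cases hσ : evalS σ (.B E S) = 0
    · simp only [hσ, zero_le]
    have hE : ∀ y ∈ E, σ y ≠ 0 := fun _ ↦ ne_zero_of_mem_guard_of_evalS_ne_zero hσ
    have hle : (E : Set ℕ).indicator 1 ≤ σ :=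
      Set.indicator_le' (fun y hy ↦ Nat.one_le_iff_ne_zero.mpr (hE y hy)) fun _ _ ↦ Nat.zero_le _
    rw [evalS_B_of_forall_ne_zero hE]
    exact h.trans (evalS_mono v hle)

-- All other variables are at most `1`, so a value of at least `N` has to come from `x`.
theorem leT_A_of_le_evalS_update {N : ℕ} (hx : x ∈ E) (hN : v.const + 1 < N)
    (h : N + S ≤ evalS (Function.update ((E : Set ℕ).indicator 1) x N) v) :
    leT (.A E x S) v := by
  set σ := Function.update ((E : Set ℕ).indicator 1) x N with hσ
  have hσ_le_one (y : ℕ) (hyx : y ≠ x) : σ y ≤ 1 := by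
    rw [hσ, Function.update_of_ne hyx]
    exact Set.indicator_le_self' (fun _ _ ↦ zero_le_one) y
  have hσv : ∀ y ∈ v.guard, σ y ≠ 0 := fun _ ↦
    ne_zero_of_mem_guard_of_evalS_ne_zero (by omega)
  cases v with
  | A F y T =>
    rw [evalS_A_of_forall_ne_zero (E := F) hσv] at h
    obtain rfl : y = x := by
      by_contra hyx
      have := hσ_le_one y hyx
      simp only [SubLvl.const] at hN
      omega
    have hFE : F ⊆ E := by
      intro z hz
      by_cases hzy : z = y
      · exact hzy ▸ hx
      · have hσz := hσv z hz
        rw [hσ, Function.update_of_ne hzy] at hσz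
        exact Set.mem_of_indicator_ne_zero hσz
    rw [hσ, Function.update_self] at h
    exact leT_A_A_of_subset_of_le hFE (Nat.le_of_add_le_add_left h)
  | B F T =>
    rw [evalS_B_of_forall_ne_zero (E := F) hσv] at h
    simp only [SubLvl.const] at hN
    omega

theorem exists_leT_of_forall_evalS_le_sup {V : Finset SubLvl} (hu : Wf u)
    (h : ∀ σ, evalS σ u ≤ V.sup (evalS σ)) : ∃ v ∈ V, leT u v := by
  have exists_le (σ : ℕ → ℕ) (hσ : ∀ y ∈ u.guard, σ y ≠ 0) :
      ∃ v ∈ V, evalS σ u ≤ evalS σ v :=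
    (Finset.le_sup_iff (Nat.pos_of_ne_zero (hu.evalS_ne_zero hσ))).mp (h σ)
  cases u with
  | A E x S =>
    let N := V.sup SubLvl.const + 2
    let σ := Function.update ((E : Set ℕ).indicator 1) x N
    have hσ : ∀ y ∈ E, σ y ≠ 0 := by
      intro y hy
      by_cases hyx : y = x <;> simp [σ, N, hyx, hy]
    obtain ⟨v, hv, hle⟩ := exists_le σ hσ
    have hvN : v.const + 1 < N := by
      have : v.const ≤ V.sup SubLvl.const := Finset.le_sup hv
      omega
    rw [evalS_A_of_forall_ne_zero hσ, show σ x = N from Function.update_self ..] at hle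
    exact ⟨v, hv, leT_A_of_le_evalS_update hu hvN hle⟩
  | B E S =>
    have hσ : ∀ y ∈ E, (E : Set ℕ).indicator (1 : ℕ → ℕ) y ≠ 0 := fun y hy ↦ by simp [hy]
    obtain ⟨v, hv, hle⟩ := exists_le _ hσ
    rw [evalS_B_of_forall_ne_zero hσ] at hle
    exact ⟨v, hv, leT_B_iff.mpr hle⟩

end Comparison

theorem MinRep.subset_of_sup_evalS_eq {U V : Finset SubLvl} (hU : MinRep U)
    (hV : ∀ v ∈ V, Wf v) (h : ∀ σ, U.sup (evalS σ) = V.sup (evalS σ)) : U ⊆ V := by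
  have hUV : ∀ u ∈ U, ∃ v ∈ V, leT u v := fun u hu ↦
    exists_leT_of_forall_evalS_le_sup (hU.1 u hu) fun σ ↦ h σ ▸ Finset.le_sup (f := evalS σ) hu
  have hVU : ∀ v ∈ V, ∃ u ∈ U, leT v u := fun v hv ↦
    exists_leT_of_forall_evalS_le_sup (hV v hv) fun σ ↦ h σ ▸ Finset.le_sup (f := evalS σ) hv
  have hU_antichain : IsAntichain leT (U : Set SubLvl) := hU.2
  exact subset_of_isAntichain_of_dominated hU_antichain
    (fun u hu v hv ↦ leT_antisymm (hU.1 u hu) (hV v hv)) hUV hVU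

theorem minrep_unique (U V : Finset SubLvl) (hU : MinRep U) (hV : MinRep V) :
    (∀ σ : ℕ → ℕ, U.sup (evalS σ) = V.sup (evalS σ)) ↔ U = V := by
  constructor
  · intro h
    exact (hU.subset_of_sup_evalS_eq hV.1 h).antisymm
      (hV.subset_of_sup_evalS_eq hU.1 fun σ ↦ (h σ).symm)
  · rintro rfl σ
    rfl
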